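/- arXiv:1308.4635 — 5 statements merged into one kernel-verified Lean document; each statement's English description precedes it below -/
import Mathlib

section
/- Let δ ≥ 0 and let P be a 4-partite no-signaling box whose Bell value satisfies B·P ≤ δ. Then for every input u* ∈ U₀ ∪ U₁, the probability p := ∑_{x : maj(x¹,x²,x³)=0} P(x|u*) that the majority of the first three output bits equals 0 satisfies 1/2 − (11+7δ)/32 ≤ p ≤ 1/2 + (11+7δ)/32. -/
/-!
The theorem is a linear programming bound, proved by a dual certificate. It suffices to show
`32 * Pr(maj = c | u*) ≤ 27 + 7 * B·P` for both values of `c` (`prob_maj_le`): the case `c = 0` is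
the upper bound, and `c = 1` the lower bound, as the two probabilities add up to `1`.

A linear functional `f(x,u)` is called null here if `∑ f(x,u) P(x|u) = 0` for all no-signaling `P`.
By Fourier inversion in the outputs, `P(x|u)` is a combination of the correlators `corr P s u`, and
no-signaling says that such a correlator depends only on the settings of the parties in `s`
(`corr_mask`). So `f` is null as soon as finitely many integer sums, its coefficients along the
correlators, vanish (`pairing_eq_zero`). If moreover `f` lies pointwise below the coefficients of
`27 + 7 * B·P - 32 * Pr(maj = c | u*)`, the inequality follows from `P ≥ 0`.

One functional, `dual0`, serves all settings `u*` and both values of `c`. When `u* ∈ U₀` and the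
outputs have XOR `1`, the four outputs contain one or three ones, so every three of them have the
same majority. A certificate can therefore be chosen that bounds the majority of each triple of
parties at once. The cases `u* = 0001`, `1000`, etc. are then related by permuting the parties,
and the settings in `U₁` and the value `c = 1` by flipping bits.
-/

open Finset

/-- The set `U₀` of measurement settings (bits written as booleans, `0 ↔ false`). -/
def U0 : Finset (Fin 4 → Bool) :=
  { ![false,false,false,true], ![false,false,true,false],
    ![false,true,false,false], ![true,false,false,false] }

/-- The set `U₁` of measurement settings. -/
def U1 : Finset (Fin 4 → Bool) :=
  { ![false,true,true,true], ![true,false,true,true],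
    ![true,true,false,true], ![true,true,true,false] }

/-- XOR of the four output bits. -/
def parity4 (x : Fin 4 → Bool) : Bool := xor (x 0) (xor (x 1) (xor (x 2) (x 3)))

/-- The Bell coefficient `B(x,u)`. -/
def BellCoeff (x u : Fin 4 → Bool) : ℝ :=
  if (u ∈ U0 ∧ parity4 x = false) ∨ (u ∈ U1 ∧ parity4 x = true) then 1 else 0

/-- The Bell value `B·P = ∑_{u ∈ U₀ ∪ U₁} ∑_x B(x,u) P(x|u)` of a box `P`
(`P x u` denotes `P(x|u)`). -/
def BellValue (P : (Fin 4 → Bool) → (Fin 4 → Bool) → ℝ) : ℝ :=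
  ∑ u ∈ U0 ∪ U1, ∑ x : Fin 4 → Bool, BellCoeff x u * P x u

/-- `P` is a 4-partite box: nonnegative and normalized for every input. -/
def IsBox (P : (Fin 4 → Bool) → (Fin 4 → Bool) → ℝ) : Prop :=
  (∀ x u, 0 ≤ P x u) ∧ (∀ u, ∑ x : Fin 4 → Bool, P x u = 1)

/-- `P` is no-signaling: for every proper subset `S` of the four parties, the marginal
distribution of the outputs of the parties in `S` depends only on the inputs in `S`. -/
def NoSignaling (P : (Fin 4 → Bool) → (Fin 4 → Bool) → ℝ) : Prop :=
  ∀ S : Finset (Fin 4), S ≠ univ →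
    ∀ u u' : Fin 4 → Bool, (∀ i ∈ S, u i = u' i) →
      ∀ y : Fin 4 → Bool,
        ∑ x ∈ univ.filter (fun x : Fin 4 → Bool => ∀ i ∈ S, x i = y i), P x u =
        ∑ x ∈ univ.filter (fun x : Fin 4 → Bool => ∀ i ∈ S, x i = y i), P x u'

/-- Majority of three bits: `false` iff at least two of the three bits are `false`. -/
def maj (a b c : Bool) : Bool := (a && b) || (a && c) || (b && c)

/-- The character `(-1)^(∑_{i ∈ s} x i)`; the set `s` of parties is given by its indicator. -/
def chi (s x : Fin 4 → Bool) : ℤ := bif parity4 fun i => s i && x i then -1 else 1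

/-- The settings of the parties in `s`, all other settings being replaced by `0`. -/
def mask (s u : Fin 4 → Bool) : Fin 4 → Bool := fun i => s i && u i

/-- The null functional for the target setting `u* = 0001`, party `3` being the special one. It
comes from an optimal dual solution of the linear program maximizing
`32 * Pr(maj = 0 | u*) - 7 * B·P` over no-signaling boxes, symmetrized over the three ordinary
parties: it is invariant under their permutations, acting on settings and outputs together. -/
def dual0 (x u : Fin 4 → Bool) : ℤ :=
  let even := !parity4 x
  let one (y z : Bool) : ℤ := bif even then (bif xor y z then 3 else bif y then -8 else 2) else 0
  let three (a y z : Bool) : ℤ :=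
    bif even then 0 else bif xor y z then (bif a then -8 else 2) else 3
  let two (a y z : Bool) : ℤ := bif a && !xor y z && xor y (x 3) then -10 else 0
  let allEq : Bool := !xor (x 0) (x 1) && !xor (x 1) (x 2)
  match u 0, u 1, u 2, u 3 with
  | false, false, false, true =>
      match x 0, x 1, x 2, x 3 with
      | false, false, false, false => -6
      | true, true, true, true => 34
      | a, b, c, _ => bif even then 2 else bif maj a b c then 15 else -5
  | true, false, false, false => one (x 1) (x 2)
  | false, true, false, false => one (x 0) (x 2)
  | false, false, true, false => one (x 0) (x 1)
  | false, true, true, true => three (x 0) (x 1) (x 2)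
  | true, false, true, true => three (x 1) (x 0) (x 2)
  | true, true, false, true => three (x 2) (x 0) (x 1)
  | true, true, true, false => bif even then 0 else bif allEq then 6 else -2
  | false, true, true, false => two (x 0) (x 1) (x 2)
  | true, false, true, false => two (x 1) (x 0) (x 2)
  | true, true, false, false => two (x 2) (x 0) (x 1)
  | true, true, true, true => bif allEq && x 3 then -10 else 0
  | _, _, _, _ => 0

/-- The settings of `U₀ ∪ U₁`: party `k` alone measures `1` (for `b = 0`), or party `k` alone
measures `0` (for `b = 1`). -/
def star (k : Fin 4) (b : Bool) : Fin 4 → Bool := fun i => xor (decide (i = k)) b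

/-- Recoding of a bit string: permute the parties by `σ`, then flip the bits marked by `a`. -/
def recode (σ : Equiv.Perm (Fin 4)) (a : Fin 4 → Bool) : (Fin 4 → Bool) ≃ (Fin 4 → Bool) where
  toFun x i := xor (x (σ i)) (a i)
  invFun y i := xor (y (σ.symm i)) (a (σ.symm i))
  left_inv x := by ext i; simp
  right_inv y := by ext i; simp

/-- The null functional for the target setting `star k b` and the event `maj = c`. It is `dual0`
with parties `k` and `3` exchanged. For `c = 1` all four outputs are flipped, which preserves the
Bell coefficients and negates the majority. For `b = 1` all settings are complemented, and so is the
output of party `3`: this exchanges `U₀` with `U₁`, preserves the Bell coefficients, and does not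
affect the majority of the first three outputs. (The exchange moves party `3` to position `k`,
whence `i = k`.) -/
def dual (k : Fin 4) (b c : Bool) (x u : Fin 4 → Bool) : ℤ :=
  dual0 (recode (Equiv.swap k 3) (fun i => xor c (b && decide (i = k))) x)
    (recode (Equiv.swap k 3) (fun _ => b) u)

set_option maxRecDepth 100000 in
/-- All correlator coefficients of `dual0` vanish: for each set `s` of parties and each setting `v`
of these parties, its component along the correlator `corr P s v` is zero. -/
lemma dual0_null : ∀ s v : Fin 4 → Bool,
    ∑ u with mask s u = v, ∑ x, dual0 x u * chi s x = 0 := by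
  decide +kernel

set_option maxRecDepth 100000 in
/-- Dual feasibility: the null functional lies pointwise below the coefficients of
`27 + 7 * B·P - 32 * Pr(maj = c | u*)`, the constant `27` being written as `27 * ∑ x, P x u*`. -/
lemma dual_le : ∀ (k : Fin 4) (b c : Bool) (x u : Fin 4 → Bool),
    dual k b c x u ≤
      (if u = star k b then 27 - 32 * (if maj (x 0) (x 1) (x 2) = c then 1 else 0) else 0) +
      7 * (if (u ∈ U0 ∧ parity4 x = false) ∨ (u ∈ U1 ∧ parity4 x = true) then 1 else 0) := by
  decide +kernel

lemma exists_star : ∀ u ∈ U0 ∪ U1, ∃ k b, u = star k b := by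
  decide +kernel

/-- Orthogonality of the characters. -/
lemma chi_sum : ∀ x y : Fin 4 → Bool, ∑ s, chi s x * chi s y = if x = y then 16 else 0 := by
  decide +kernel

/-- The correlator of the parties in `s` under the settings `u`: the expectation of `chi s`. -/
noncomputable def corr (P : (Fin 4 → Bool) → (Fin 4 → Bool) → ℝ) (s u : Fin 4 → Bool) : ℝ :=
  ∑ x, (chi s x : ℝ) * P x u

/-- Fourier inversion on the output bits. -/
lemma box_eq_sum_corr (P : (Fin 4 → Bool) → (Fin 4 → Bool) → ℝ) (x u : Fin 4 → Bool) :
    16 * P x u = ∑ s, (chi s x : ℝ) * corr P s u := by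
  have key : ∀ y, ∑ s, (chi s x : ℝ) * chi s y = if x = y then 16 else 0 := fun y => by
    exact_mod_cast chi_sum x y
  simp only [corr, mul_sum, ← mul_assoc]
  rw [sum_comm]
  simp only [← sum_mul, key]
  simp

/-- No-signaling in terms of correlators: `corr P s u` depends only on the settings of the parties
in `s`. -/
lemma corr_mask {P : (Fin 4 → Bool) → (Fin 4 → Bool) → ℝ} (hns : NoSignaling P)
    (s u : Fin 4 → Bool) : corr P s u = corr P s (mask s u) := by
  -- `NoSignaling` says nothing about the set of all parties, but there `mask` changes nothing.
  by_cases hs : univ.filter (fun i => s i = true) = univ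
  · have : mask s u = u := by
      ext i
      have : s i = true := by simpa using (Finset.ext_iff.1 hs i)
      simp [mask, this]
    rw [this]
  · unfold corr
    rw [← sum_fiberwise univ (mask s), ← sum_fiberwise univ (mask s) (fun x => _ * P x (mask s u))]
    refine sum_congr rfl fun y _ => ?_
    have hchi : ∀ x, mask s x = y → chi s x = chi s y := by
      rintro x rfl
      simp [chi, mask]
    have hfactor : ∀ w, ∑ x with mask s x = y, (chi s x : ℝ) * P x w =
        chi s y * ∑ x with mask s x = y, P x w := fun w => by
      rw [mul_sum]
      exact sum_congr rfl fun x hx => by rw [hchi x (mem_filter.1 hx).2]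
    rw [hfactor, hfactor]
    -- A fibre of `mask s` is empty or an event of the kind occurring in `NoSignaling`.
    by_cases hy : mask s y = y
    · have hf : univ.filter (fun x => mask s x = y) = univ.filter (fun x : Fin 4 → Bool =>
          ∀ i ∈ univ.filter (fun i => s i = true), x i = y i) := by
        ext x
        simp only [mem_filter, mem_univ, true_and]
        rw [← hy, funext_iff]
        refine forall_congr' fun i => ?_
        cases h : s i <;> simp [mask, h]
      rw [hf, hns _ hs u (mask s u) fun i hi => by simp_all [mask]]
    · have hf : univ.filter (fun x => mask s x = y) = ∅ := by
        refine filter_eq_empty_iff.2 fun x _ hx => hy ?_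
        subst hx
        ext i
        simp [mask]
      simp [hf]

/-- A functional whose correlator coefficients all vanish is zero on every no-signaling box. -/
lemma pairing_eq_zero {P : (Fin 4 → Bool) → (Fin 4 → Bool) → ℝ} (hns : NoSignaling P)
    (f : (Fin 4 → Bool) → (Fin 4 → Bool) → ℤ)
    (hf : ∀ s v, ∑ u with mask s u = v, ∑ x, f x u * chi s x = 0) :
    ∑ u, ∑ x, (f x u : ℝ) * P x u = 0 := by
  have h16 : 16 * ∑ u, ∑ x, (f x u : ℝ) * P x u =
      ∑ s, ∑ u, (∑ x, (f x u : ℝ) * chi s x) * corr P s u := by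
    rw [sum_comm (s := univ (α := Fin 4 → Bool))
      (f := fun s u => (∑ x, (f x u : ℝ) * chi s x) * corr P s u), mul_sum]
    refine sum_congr rfl fun u _ => ?_
    simp only [mul_sum, sum_mul]
    rw [sum_comm]
    refine sum_congr rfl fun x _ => ?_
    rw [mul_left_comm, box_eq_sum_corr, mul_sum]
    simp only [mul_assoc]
  suffices h : ∀ s, ∑ u, (∑ x, (f x u : ℝ) * chi s x) * corr P s u = 0 by
    simp only [h, sum_const_zero] at h16
    linarith
  intro s
  rw [← sum_fiberwise univ (mask s)]
  refine sum_eq_zero fun v _ => ?_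
  have hv : ∑ u with mask s u = v, ∑ x, (f x u : ℝ) * chi s x = 0 := by exact_mod_cast hf s v
  rw [sum_congr rfl fun u hu => by rw [corr_mask hns s u, (mem_filter.1 hu).2], ← sum_mul, hv,
    zero_mul]

lemma NoSignaling.recode {P : (Fin 4 → Bool) → (Fin 4 → Bool) → ℝ} (hns : NoSignaling P)
    (σ : Equiv.Perm (Fin 4)) (a b : Fin 4 → Bool) :
    NoSignaling fun x u => P (recode σ a x) (recode σ b u) := by
  intro S hS u u' huu' y
  have hS' : univ.filter (fun i => σ i ∈ S) ≠ univ := fun h => hS <| by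
    ext i
    simpa using Finset.ext_iff.1 h (σ.symm i)
  have hreindex : ∀ w, ∑ x with ∀ i ∈ S, x i = y i, P (_root_.recode σ a x) w =
      ∑ x with ∀ i ∈ univ.filter (fun i => σ i ∈ S), x i = _root_.recode σ a y i, P x w :=
    fun w => by
      refine sum_equiv (_root_.recode σ a) (fun x => ?_) fun _ _ => rfl
      simp only [mem_filter, mem_univ, true_and, _root_.recode, Equiv.coe_fn_mk,
        Bool.xor_left_inj]
      exact (σ.forall_congr_right (q := fun i => i ∈ S → x i = y i)).symm
  rw [hreindex, hreindex]
  refine hns _ hS' _ _ (fun i hi => ?_) _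
  simp only [mem_filter, mem_univ, true_and] at hi
  simp [_root_.recode, huu' _ hi]

lemma dual_pairing {P : (Fin 4 → Bool) → (Fin 4 → Bool) → ℝ} (hns : NoSignaling P)
    (k : Fin 4) (b c : Bool) : ∑ u, ∑ x, (dual k b c x u : ℝ) * P x u = 0 := by
  set A := recode (Equiv.swap k 3) (fun i => xor c (b && decide (i = k))) with hA
  set B := recode (Equiv.swap k 3) (fun _ => b) with hB
  have h := pairing_eq_zero (P := fun x u => P (A.symm x) (B.symm u))
    (hns.recode (Equiv.swap k 3).symm _ _) dual0 dual0_null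
  rw [← h, ← B.symm.sum_comp]
  refine sum_congr rfl fun u _ => ?_
  rw [← A.symm.sum_comp]
  simp [dual, ← hA, ← hB]

lemma prob_maj_le {P : (Fin 4 → Bool) → (Fin 4 → Bool) → ℝ} (hbox : IsBox P)
    (hns : NoSignaling P) {ustar : Fin 4 → Bool} (hu : ustar ∈ U0 ∪ U1) (c : Bool) :
    32 * ∑ x ∈ univ.filter (fun x : Fin 4 → Bool => maj (x 0) (x 1) (x 2) = c), P x ustar
      ≤ 27 + 7 * BellValue P := by
  obtain ⟨k, b, rfl⟩ := exists_star ustar hu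
  have hzero := dual_pairing hns k b c
  have hle : ∀ u x, (dual k b c x u : ℝ) * P x u ≤
      (if u = star k b then
        27 * P x u - 32 * (if maj (x 0) (x 1) (x 2) = c then P x u else 0) else 0) +
      7 * (BellCoeff x u * P x u) := fun u x => by
    have h : (dual k b c x u : ℝ) ≤ _ := Int.cast_le.2 (dual_le k b c x u)
    refine (mul_le_mul_of_nonneg_right h (hbox.1 x u)).trans_eq ?_
    unfold BellCoeff
    push_cast
    split_ifs <;> ring
  have hbell : BellValue P = ∑ u, ∑ x, BellCoeff x u * P x u := by
    refine sum_subset (subset_univ _) fun u _ hu => sum_eq_zero fun x _ => ?_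
    have h0 : u ∉ U0 := fun h => hu (mem_union_left _ h)
    have h1 : u ∉ U1 := fun h => hu (mem_union_right _ h)
    simp [BellCoeff, h0, h1]
  have hsum := sum_le_sum fun u (_ : u ∈ univ) => sum_le_sum fun x (_ : x ∈ univ) => hle u x
  simp only [sum_add_distrib, ← mul_sum, ← hbell] at hsum
  rw [hzero, sum_comm] at hsum
  simp only [sum_ite_eq', mem_univ, if_true, sum_sub_distrib, ← mul_sum, hbox.2,
    ← sum_filter] at hsum
  linarith

/-- For any no-signaling box with Bell value at most `δ` and any setting
`u* ∈ U₀ ∪ U₁`, the probability `p` that the majority of the first three output bits is `0`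
satisfies `1/2 − (11+7δ)/32 ≤ p ≤ 1/2 + (11+7δ)/32`. -/
theorem majority_bit_bound_of_small_bell_value
    (δ : ℝ) (hδ : 0 ≤ δ)
    (P : (Fin 4 → Bool) → (Fin 4 → Bool) → ℝ)
    (hbox : IsBox P) (hns : NoSignaling P)
    (hbell : BellValue P ≤ δ)
    (ustar : Fin 4 → Bool) (hu : ustar ∈ U0 ∪ U1) :
    1/2 - (11 + 7*δ)/32
        ≤ ∑ x ∈ univ.filter (fun x : Fin 4 → Bool => maj (x 0) (x 1) (x 2) = false), P x ustar ∧
    ∑ x ∈ univ.filter (fun x : Fin 4 → Bool => maj (x 0) (x 1) (x 2) = false), P x ustar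
        ≤ 1/2 + (11 + 7*δ)/32 := by
  have hfalse := prob_maj_le hbox hns hu false
  have htrue := prob_maj_le hbox hns hu true
  have htotal := hbox.2 ustar
  rw [← sum_filter_add_sum_filter_not univ
    (fun x : Fin 4 → Bool => maj (x 0) (x 1) (x 2) = false)] at htotal
  simp only [Bool.not_eq_false] at htotal
  constructor <;> linarith
end

section
/- Let A and Σ be finite nonempty sets, let n ≥ 1, and let p be a probability distribution on A × Σⁿ, with coordinates denoted (A, X₁, …, X_n). Then (1/n) · ∑_{i=1}^{n} E_{(a,x)∼p} ‖ p_{A, X_i | X_{<i}=x_{<i}} − p_{A | X_{<i}=x_{<i}} ⊗ p_{X_i | X_{<i}=x_{<i}} ‖₁ ≤ √( 2·ln(2)·log₂|A| / n ), where for a history x_{<i} = (x₁,…,x_{i−1}) of positive probability, p_{A, X_i | X_{<i}=x_{<i}} denotes the conditional joint distribution of (A, X_i) given X_{<i}=x_{<i}, and p_{A | X_{<i}=x_{<i}}, p_{X_i | X_{<i}=x_{<i}} its marginals. -/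
/-!
Since `log 2 * logb 2 |A| = log |A|`, the claim is the standard consequence of Pinsker's inequality
and the chain rule for mutual information, with entropies measured in nats.

By Cauchy-Schwarz for the weights `p / n`, it is enough to bound the sum over `i` of
`E (condL1 p i X) ^ 2` by `2 * log |A|`. For a fixed history, Pinsker's inequality (`pinsker`)
bounds `condL1 ^ 2` by twice the relative entropy of the conditional joint distribution of
`(A, X_i)` to the product of its marginals. Averaging over histories (`tower`) turns this
relative entropy into the expectation of
`log (P(a | x_{≤ i}) / P(a | x_{< i}))` (`expected_condL1_sq_le`), so the sum over `i` telescopes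
to `H(A) - H(A | X) ≤ H(A) ≤ log |A|`.
-/

open Finset

noncomputable section

variable {A S : Type*} [Fintype A] [Fintype S] [DecidableEq A] [DecidableEq S]
variable {n : ℕ}

/-- Probability (under `p`) of the history `x_{<i}` of the string `x`. -/
def histP (p : A × (Fin n → S) → ℝ) (i : Fin n) (x : Fin n → S) : ℝ :=
  ∑ az ∈ univ.filter (fun az : A × (Fin n → S) => ∀ j : Fin n, j < i → az.2 j = x j), p az

/-- Conditional joint distribution of `(A, X_i)` given the history `x_{<i}`. -/
def condJoint (p : A × (Fin n → S) → ℝ) (i : Fin n) (x : Fin n → S) (b : A) (s : S) : ℝ :=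
  (∑ az ∈ univ.filter (fun az : A × (Fin n → S) =>
      (∀ j : Fin n, j < i → az.2 j = x j) ∧ az.1 = b ∧ az.2 i = s), p az) / histP p i x

/-- Conditional distribution of `A` given the history `x_{<i}`. -/
def condA (p : A × (Fin n → S) → ℝ) (i : Fin n) (x : Fin n → S) (b : A) : ℝ :=
  (∑ az ∈ univ.filter (fun az : A × (Fin n → S) =>
      (∀ j : Fin n, j < i → az.2 j = x j) ∧ az.1 = b), p az) / histP p i x

/-- Conditional distribution of `X_i` given the history `x_{<i}`. -/
def condX (p : A × (Fin n → S) → ℝ) (i : Fin n) (x : Fin n → S) (s : S) : ℝ :=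
  (∑ az ∈ univ.filter (fun az : A × (Fin n → S) =>
      (∀ j : Fin n, j < i → az.2 j = x j) ∧ az.2 i = s), p az) / histP p i x

/-- ℓ₁ distance between the conditional joint distribution of `(A, X_i)` given the history
`x_{<i}` and the product of its marginals. -/
def condL1 (p : A × (Fin n → S) → ℝ) (i : Fin n) (x : Fin n → S) : ℝ :=
  ∑ b : A, ∑ s : S, |condJoint p i x b s - condA p i x b * condX p i x s|

end

/-! ### Pinsker's inequality -/

/-- The right-hand side is tangent to `log` at `t = 1`, and the difference has derivative
`(t - 1) ^ 3 / (t ^ 2 * (t + 2) ^ 2)`, so that it attains its minimum `0` there. -/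
lemma log_lower_bound {t : ℝ} (ht : 0 < t) :
    (t - 1) * (5 * t + 1) / (2 * t * (t + 2)) ≤ Real.log t := by
  set h : ℝ → ℝ := fun t => Real.log t - (t - 1) * (5 * t + 1) / (2 * t * (t + 2)) with hh
  have hd : ∀ u : ℝ, 0 < u → HasDerivAt h ((u - 1) ^ 3 / (u ^ 2 * (u + 2) ^ 2)) u := by
    intro u hu
    have h1 : HasDerivAt (fun t : ℝ => (t - 1) * (5 * t + 1)) (10 * u - 4) u := by
      have := ((hasDerivAt_id u).sub_const 1).mul (((hasDerivAt_id u).const_mul 5).add_const 1)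
      refine this.congr_deriv ?_
      simp
      ring
    have h2 : HasDerivAt (fun t : ℝ => 2 * t * (t + 2)) (4 * u + 4) u := by
      have := ((hasDerivAt_id u).const_mul 2).mul ((hasDerivAt_id u).add_const 2)
      refine this.congr_deriv ?_
      simp
      ring
    have h3 := (Real.hasDerivAt_log hu.ne').sub (h1.div h2 (by positivity))
    refine h3.congr_deriv ?_
    field_simp
    ring
  have h1 : h 1 = 0 := by simp [hh]
  have key : 0 ≤ h t := by
    rw [← h1]
    rcases le_total t 1 with h | h
    · refine antitoneOn_of_deriv_nonpos (convex_Ioc 0 1)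
        (fun u hu => (hd u hu.1).continuousAt.continuousWithinAt)
        (fun u hu => ?_) (fun u hu => ?_) ⟨ht, h⟩ ⟨one_pos, le_rfl⟩ h
      · exact (hd u (interior_subset hu).1).differentiableAt.differentiableWithinAt
      · have hu' := interior_subset hu
        rw [(hd u hu'.1).deriv]
        exact div_nonpos_of_nonpos_of_nonneg
          (Odd.pow_nonpos (by decide) (by linarith [hu'.2])) (by positivity)
    · refine monotoneOn_of_deriv_nonneg (convex_Ici 1)
        (fun u hu => (hd u (one_pos.trans_le hu)).continuousAt.continuousWithinAt)
        (fun u hu => ?_) (fun u hu => ?_) Set.self_mem_Ici h h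
      · exact (hd u (one_pos.trans_le (interior_subset hu))).differentiableAt.differentiableWithinAt
      · have hu' : 1 ≤ u := interior_subset hu
        rw [(hd u (one_pos.trans_le hu')).deriv]
        have : 0 ≤ u - 1 := by linarith
        positivity
  simp only [hh] at key
  linarith

/-- The pointwise inequality behind Pinsker's inequality. -/
lemma pinsker_pointwise {P Q : ℝ} (hP : 0 ≤ P) (hQ : 0 ≤ Q) (hac : Q = 0 → P = 0) :
    |P - Q| ^ 2 ≤ (2 * P + 4 * Q) / 3 * (P * Real.log (P / Q) - P + Q) := by
  rw [sq_abs]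
  rcases hQ.eq_or_lt' with h | hQ
  · simp [h, hac h]
  rcases hP.eq_or_lt' with h | hP
  · subst h
    simp
    nlinarith
  have h := log_lower_bound (div_pos hP hQ)
  have e : (P / Q - 1) * (5 * (P / Q) + 1) / (2 * (P / Q) * (P / Q + 2))
      = (P - Q) * (5 * P + Q) / (2 * P * (P + 2 * Q)) := by
    field_simp
  rw [e, div_le_iff₀ (by positivity)] at h
  nlinarith

lemma pinsker {ι : Type*} [Fintype ι] (P Q : ι → ℝ) (hP : ∀ i, 0 ≤ P i) (hQ : ∀ i, 0 ≤ Q i)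
    (hac : ∀ i, Q i = 0 → P i = 0) (hP1 : ∑ i, P i = 1) (hQ1 : ∑ i, Q i = 1) :
    (∑ i, |P i - Q i|) ^ 2 ≤ 2 * ∑ i, P i * Real.log (P i / Q i) := by
  have hw : ∀ i, 0 ≤ (2 * P i + 4 * Q i) / 3 := fun i => by linarith [hP i, hQ i]
  have h := sum_sq_le_sum_mul_sum_of_sq_le_mul univ (r := fun i => |P i - Q i|)
    (f := fun i => (2 * P i + 4 * Q i) / 3)
    (g := fun i => P i * Real.log (P i / Q i) - P i + Q i) (fun i _ => hw i)
    (fun i _ => ?_) (fun i _ => pinsker_pointwise (hP i) (hQ i) (hac i))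
  · rw [← sum_div, sum_add_distrib, sum_add_distrib, sum_sub_distrib, ← mul_sum, ← mul_sum, hP1,
      hQ1] at h
    linarith
  · have h := pinsker_pointwise (hP i) (hQ i) (hac i)
    rcases (hw i).eq_or_lt' with h0 | h0
    · have e1 : P i = 0 := by linarith [hP i, hQ i]
      have e2 : Q i = 0 := by linarith [hP i, hQ i]
      simp [e1, e2]
    · exact nonneg_of_mul_nonneg_right ((sq_nonneg _).trans h) h0

/-! ### Averaging over histories -/

section

set_option linter.unusedSectionVars false

variable {A S : Type*} [Fintype A] [Fintype S] [DecidableEq A] [DecidableEq S] {n : ℕ}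

/-- Mass of the event that the first `k` letters agree with those of `x`. -/
noncomputable def prefMass (p : A × (Fin n → S) → ℝ) (k : ℕ) (x : Fin n → S) : ℝ :=
  ∑ az ∈ univ.filter (fun az : A × (Fin n → S) => ∀ j : Fin n, j.val < k → az.2 j = x j), p az

/-- Mass of the event that the first `k` letters agree with those of `x` and `A = b`. -/
noncomputable def prefMassA (p : A × (Fin n → S) → ℝ) (k : ℕ) (b : A) (x : Fin n → S) : ℝ :=
  ∑ az ∈ univ.filter (fun az : A × (Fin n → S) =>
    (∀ j : Fin n, j.val < k → az.2 j = x j) ∧ az.1 = b), p az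

lemma histP_congr (p : A × (Fin n → S) → ℝ) (i : Fin n) {x y : Fin n → S}
    (h : ∀ j : Fin n, j < i → x j = y j) : histP p i x = histP p i y := by
  unfold histP
  congr 1
  ext z
  simp only [mem_filter, mem_univ, true_and]
  exact forall₂_congr fun j hj => by rw [h j hj]

lemma condJoint_congr (p : A × (Fin n → S) → ℝ) (i : Fin n) {x y : Fin n → S}
    (h : ∀ j : Fin n, j < i → x j = y j) : condJoint p i x = condJoint p i y := by
  funext b s
  unfold condJoint
  rw [histP_congr p i h]
  congr 2
  ext z
  simp only [mem_filter, mem_univ, true_and]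
  exact and_congr_left' (forall₂_congr fun j hj => by rw [h j hj])

/-- The conditional expectation of `f(A, X_i)` given the history, as a sum over `A × Σⁿ`. -/
lemma sum_condJoint_mul (p : A × (Fin n → S) → ℝ) (i : Fin n) (x : Fin n → S) (f : A → S → ℝ) :
    ∑ b, ∑ s, condJoint p i x b s * f b s =
      (∑ z ∈ univ.filter (fun z : A × (Fin n → S) => ∀ j : Fin n, j < i → z.2 j = x j),
        p z * f z.1 (z.2 i)) / histP p i x := by
  have e : ∀ b s, condJoint p i x b s * f b s =
      (∑ z ∈ univ.filter (fun z : A × (Fin n → S) => ∀ j : Fin n, j < i → z.2 j = x j),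
        if z.1 = b then (if z.2 i = s then p z * f b s else 0) else 0) / histP p i x := by
    intro b s
    unfold condJoint
    rw [div_mul_eq_mul_div, sum_mul, ← filter_filter, sum_filter]
    simp only [ite_and]
  simp only [e, ← sum_div]
  congr 1
  rw [sum_congr rfl fun b _ => sum_comm, sum_comm]
  refine sum_congr rfl fun z _ => ?_
  rw [sum_comm]
  simp

lemma condA_eq_sum (p : A × (Fin n → S) → ℝ) (i : Fin n) (x : Fin n → S) (b : A) :
    condA p i x b = ∑ s, condJoint p i x b s := by
  unfold condA condJoint
  rw [← sum_div]
  congr 1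
  simp only [sum_filter]
  rw [sum_comm]
  refine sum_congr rfl fun z _ => ?_
  simp only [ite_and]
  split_ifs <;> simp

lemma condX_eq_sum (p : A × (Fin n → S) → ℝ) (i : Fin n) (x : Fin n → S) (s : S) :
    condX p i x s = ∑ b, condJoint p i x b s := by
  unfold condX condJoint
  rw [← sum_div]
  congr 1
  simp only [sum_filter]
  rw [sum_comm]
  refine sum_congr rfl fun z _ => ?_
  simp only [ite_and]
  split_ifs <;> simp

lemma condA_congr (p : A × (Fin n → S) → ℝ) (i : Fin n) {x y : Fin n → S}
    (h : ∀ j : Fin n, j < i → x j = y j) : condA p i x = condA p i y := by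
  funext b
  simp only [condA_eq_sum, condJoint_congr p i h]

lemma condX_congr (p : A × (Fin n → S) → ℝ) (i : Fin n) {x y : Fin n → S}
    (h : ∀ j : Fin n, j < i → x j = y j) : condX p i x = condX p i y := by
  funext b
  simp only [condX_eq_sum, condJoint_congr p i h]

variable {p : A × (Fin n → S) → ℝ}

lemma histP_pos (hp0 : ∀ az, 0 ≤ p az) (i : Fin n) {z : A × (Fin n → S)} (hz : 0 < p z) :
    0 < histP p i z.2 :=
  hz.trans_le (single_le_sum (f := p) (fun w _ => hp0 w) (by simp))

/-- The tower property for a function `g` of the history `x_{<i}` and of `(A, X_i)`. -/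
lemma tower (hp0 : ∀ az, 0 ≤ p az) (i : Fin n) (g : (Fin n → S) → A → S → ℝ)
    (hg : ∀ x y : Fin n → S, (∀ j : Fin n, j < i → x j = y j) → g x = g y) :
    ∑ az, p az * ∑ b, ∑ s, condJoint p i az.2 b s * g az.2 b s =
      ∑ az, p az * g az.2 az.1 (az.2 i) := by
  simp only [sum_condJoint_mul, sum_filter, sum_div, mul_sum]
  rw [sum_comm]
  refine sum_congr rfl fun z _ => ?_
  have e : ∀ w : A × (Fin n → S),
      p w * ((if ∀ j : Fin n, j < i → z.2 j = w.2 j then p z * g w.2 z.1 (z.2 i) else 0)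
        / histP p i w.2) =
      (if ∀ j : Fin n, j < i → w.2 j = z.2 j then p w else 0) *
        (p z * g z.2 z.1 (z.2 i) / histP p i z.2) := by
    intro w
    by_cases h : ∀ j : Fin n, j < i → w.2 j = z.2 j
    · have h' : ∀ j : Fin n, j < i → z.2 j = w.2 j := fun j hj => (h j hj).symm
      rw [if_pos h, if_pos h', hg _ _ h, histP_congr p i h]
    · have h' : ¬ ∀ j : Fin n, j < i → z.2 j = w.2 j := fun h' => h fun j hj => (h' j hj).symm
      rw [if_neg h, if_neg h']
      simp
  rw [sum_congr rfl fun w _ => e w, ← sum_mul, ← sum_filter]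
  change histP p i z.2 * _ = _
  rcases (hp0 z).eq_or_lt' with h | h
  · simp [h]
  · have := (histP_pos hp0 i h).ne'
    field_simp

lemma condL1_sq_le (hp0 : ∀ az, 0 ≤ p az) (i : Fin n) (x : Fin n → S) (hx : 0 < histP p i x) :
    condL1 p i x ^ 2 ≤ 2 * ∑ b, ∑ s, condJoint p i x b s *
      Real.log (condJoint p i x b s / (condA p i x b * condX p i x s)) := by
  have hJ : ∀ b s, 0 ≤ condJoint p i x b s := fun b s =>
    div_nonneg (sum_nonneg fun z _ => hp0 z) hx.le
  have hA : ∀ b, 0 ≤ condA p i x b := fun b => by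
    rw [condA_eq_sum]; exact sum_nonneg fun s _ => hJ b s
  have hX : ∀ s, 0 ≤ condX p i x s := fun s => by
    rw [condX_eq_sum]; exact sum_nonneg fun b _ => hJ b s
  have hJ1 : ∑ b, ∑ s, condJoint p i x b s = 1 := by
    have := sum_condJoint_mul p i x (fun _ _ => 1)
    simp only [mul_one] at this
    rw [this]
    exact div_self hx.ne'
  have h := pinsker (fun c : A × S => condJoint p i x c.1 c.2)
    (fun c => condA p i x c.1 * condX p i x c.2) (fun c => hJ _ _)
    (fun c => mul_nonneg (hA _) (hX _)) ?_ ?_ ?_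
  · simpa only [condL1, Fintype.sum_prod_type] using h
  · intro c hc
    rcases mul_eq_zero.1 hc with h | h
    · rw [condA_eq_sum, sum_eq_zero_iff_of_nonneg fun s _ => hJ _ s] at h
      exact h _ (mem_univ _)
    · rw [condX_eq_sum, sum_eq_zero_iff_of_nonneg fun b _ => hJ b _] at h
      exact h _ (mem_univ _)
  · rw [Fintype.sum_prod_type]; exact hJ1
  · rw [Fintype.sum_prod_type]
    simp only [← mul_sum, ← sum_mul, condA_eq_sum, condX_eq_sum]
    rw [sum_comm (s := (univ : Finset S)), hJ1, one_mul]

/-! ### The telescoping sum -/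

lemma prefMassA_pos (hp0 : ∀ az, 0 ≤ p az) (k : ℕ) {z : A × (Fin n → S)} (hz : 0 < p z) :
    0 < prefMassA p k z.1 z.2 :=
  hz.trans_le (single_le_sum (f := p) (fun w _ => hp0 w) (by simp))

lemma prefMassA_le (hp0 : ∀ az, 0 ≤ p az) (k : ℕ) (b : A) (x : Fin n → S) :
    prefMassA p k b x ≤ prefMass p k x := by
  refine sum_le_sum_of_subset_of_nonneg (fun z hz => ?_) fun z _ _ => hp0 z
  simp only [mem_filter, mem_univ, true_and] at hz ⊢
  exact hz.1

/-- Minus the conditional entropy (in nats) of `A` given the first `k` letters. -/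
noncomputable def negCondEntropy (p : A × (Fin n → S) → ℝ) (k : ℕ) : ℝ :=
  ∑ az, p az * Real.log (prefMassA p k az.1 az.2 / prefMass p k az.2)

lemma forall_lt_succ_iff (i : Fin n) (y x : Fin n → S) :
    (∀ j : Fin n, j.val < i.val + 1 → y j = x j) ↔
      (∀ j : Fin n, j < i → y j = x j) ∧ y i = x i := by
  refine ⟨fun h => ⟨fun j hj => h j (Nat.lt_succ_of_lt hj), h i (Nat.lt_succ_self _)⟩, ?_⟩
  rintro ⟨h, hi⟩ j hj
  rcases Nat.lt_succ_iff_lt_or_eq.1 hj with hj | hj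
  · exact h j hj
  · rwa [Fin.ext hj]

lemma condJoint_self (i : Fin n) (z : A × (Fin n → S)) :
    condJoint p i z.2 z.1 (z.2 i) = prefMassA p (i + 1) z.1 z.2 / prefMass p i z.2 := by
  unfold condJoint prefMassA
  congr 2
  ext w
  simp only [mem_filter, mem_univ, true_and, forall_lt_succ_iff]
  tauto

lemma condX_self (i : Fin n) (z : A × (Fin n → S)) :
    condX p i z.2 (z.2 i) = prefMass p (i + 1) z.2 / prefMass p i z.2 := by
  unfold condX
  congr 1
  unfold prefMass
  congr 1
  ext w
  simp only [mem_filter, mem_univ, true_and, forall_lt_succ_iff]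

/-- The conditional mutual information of `A` and `X_i` given `X_{<i}` is a difference of
conditional entropies; Pinsker's inequality compares it with the squared `ℓ₁` distance. -/
lemma expected_condL1_sq_le (hp0 : ∀ az, 0 ≤ p az) (i : Fin n) :
    ∑ az, p az * condL1 p i az.2 ^ 2 ≤
      2 * (negCondEntropy p (i + 1) - negCondEntropy p i) := by
  have h1 : ∑ az, p az * condL1 p i az.2 ^ 2 ≤
      2 * ∑ az, p az * ∑ b, ∑ s, condJoint p i az.2 b s *
        Real.log (condJoint p i az.2 b s / (condA p i az.2 b * condX p i az.2 s)) := by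
    rw [mul_sum]
    refine sum_le_sum fun z _ => ?_
    rcases (hp0 z).eq_or_lt' with h | h
    · simp [h]
    · rw [mul_left_comm]
      exact mul_le_mul_of_nonneg_left (condL1_sq_le hp0 i z.2 (histP_pos hp0 i h)) h.le
  refine h1.trans (le_of_eq ?_)
  rw [tower hp0 i
    (fun x b s => Real.log (condJoint p i x b s / (condA p i x b * condX p i x s)))
    (fun x y h => by rw [condJoint_congr p i h, condA_congr p i h, condX_congr p i h])]
  unfold negCondEntropy
  rw [← sum_sub_distrib]
  congr 1
  refine sum_congr rfl fun z _ => ?_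
  rcases (hp0 z).eq_or_lt' with h | h
  · simp [h]
  rw [← mul_sub]
  congr 1
  have a0 := prefMassA_pos hp0 i h
  have a1 := prefMassA_pos hp0 (i + 1) h
  have b0 := a0.trans_le (prefMassA_le hp0 _ _ _)
  have b1 := a1.trans_le (prefMassA_le hp0 _ _ _)
  have eA : condA p i z.2 z.1 = prefMassA p i z.1 z.2 / prefMass p i z.2 := rfl
  rw [condJoint_self, condX_self, eA, ← Real.log_div (by positivity) (by positivity)]
  congr 1
  field_simp

lemma negCondEntropy_nonpos (hp0 : ∀ az, 0 ≤ p az) (k : ℕ) : negCondEntropy p k ≤ 0 := by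
  refine sum_nonpos fun z _ => ?_
  rcases (hp0 z).eq_or_lt' with h | h
  · simp [h]
  have a0 := prefMassA_pos hp0 k h
  have hle := prefMassA_le hp0 k z.1 z.2
  exact mul_nonpos_of_nonneg_of_nonpos h.le
    (Real.log_nonpos (div_nonneg a0.le (a0.le.trans hle)) (div_le_one_of_le₀ hle (a0.le.trans hle)))

/-- The entropy of `A` is at most `log |A|`. -/
lemma neg_log_card_le [Nonempty A] (hp0 : ∀ az, 0 ≤ p az) (hp1 : ∑ az, p az = 1) :
    -Real.log (Fintype.card A) ≤ negCondEntropy p 0 := by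
  set N : ℝ := ((Fintype.card A : ℕ) : ℝ) with hN
  have hNpos : 0 < N := by simp [hN, Fintype.card_pos]
  set q : A → ℝ := fun b => ∑ y, p (b, y) with hq
  have e1 : ∀ x, prefMass p 0 x = 1 := by
    intro x
    simpa [prefMass] using hp1
  have e2 : ∀ b x, prefMassA p 0 b x = q b := by
    intro b x
    simp only [prefMassA, Nat.not_lt_zero, false_imp_iff, implies_true, true_and, sum_filter,
      Fintype.sum_prod_type, hq]
    rw [sum_comm]
    simp
  -- `log u ≤ u - 1` at `u = 1 / (N * q a)`, averaged over `p`
  have h1 : ∀ z, p z * (-Real.log (q z.1) - Real.log N) ≤ p z / (N * q z.1) - p z := by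
    intro z
    rcases (hp0 z).eq_or_lt' with h | h
    · simp [h]
    have hqz : 0 < q z.1 := by
      rw [← e2 z.1 z.2]; exact prefMassA_pos hp0 0 h
    have := Real.log_le_sub_one_of_pos (x := (N * q z.1)⁻¹) (by positivity)
    rw [Real.log_inv, Real.log_mul hNpos.ne' hqz.ne'] at this
    have := mul_le_mul_of_nonneg_left this h.le
    rw [div_eq_mul_inv]
    linarith
  have h2 : ∑ z, p z / (N * q z.1) ≤ 1 := by
    rw [Fintype.sum_prod_type]
    simp only [← sum_div]
    calc ∑ b, q b / (N * q b) ≤ ∑ _b : A, 1 / N := by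
          refine sum_le_sum fun b _ => ?_
          rcases eq_or_ne (q b) 0 with h | h
          · rw [h]; simp; exact hNpos.le
          · exact le_of_eq (by field_simp)
      _ = 1 := by
          rw [sum_const, card_univ, nsmul_eq_mul, ← hN]
          field_simp
  have h3 := sum_le_sum fun z (_ : z ∈ univ) => h1 z
  rw [sum_sub_distrib, hp1] at h3
  simp only [mul_sub, mul_neg, sum_sub_distrib, sum_neg_distrib, ← sum_mul, hp1] at h3
  simp only [negCondEntropy, e1, e2, div_one]
  linarith

end

open scoped BigOperators

/-- For any probability distribution `p` on `A × Σⁿ`,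
`(1/n) ∑_{i=1}^n E_{(a,x)∼p} ‖ p_{A,X_i|X_{<i}} − p_{A|X_{<i}} ⊗ p_{X_i|X_{<i}} ‖₁
  ≤ √(2·ln 2·log₂|A| / n)`. -/
theorem average_conditional_decoupling
    {A S : Type*} [Fintype A] [Fintype S] [DecidableEq A] [DecidableEq S]
    [Nonempty A] [Nonempty S]
    (n : ℕ) (hn : 1 ≤ n)
    (p : A × (Fin n → S) → ℝ) (hp0 : ∀ az, 0 ≤ p az) (hp1 : ∑ az, p az = 1) :
    (1 / (n : ℝ)) * ∑ i : Fin n, ∑ az : A × (Fin n → S), p az * condL1 p i az.2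
      ≤ Real.sqrt (2 * Real.log 2 * Real.logb 2 (Fintype.card A) / n) := by
  have hn0 : (0 : ℝ) < n := by exact_mod_cast hn
  set L : ℝ := ∑ i : Fin n, ∑ az : A × (Fin n → S), p az * condL1 p i az.2 with hL
  have hlog : 2 * Real.log 2 * Real.logb 2 (Fintype.card A) = 2 * Real.log (Fintype.card A) := by
    rw [mul_assoc, Real.logb, mul_div_cancel₀ _ (Real.log_pos one_lt_two).ne']
  have hsum : ∑ i : Fin n, ∑ az : A × (Fin n → S), p az * condL1 p i az.2 ^ 2 ≤
      2 * Real.log (Fintype.card A) := by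
    calc _ ≤ ∑ i : Fin n, 2 * (negCondEntropy p (i.val + 1) - negCondEntropy p i.val) :=
          sum_le_sum fun i _ => expected_condL1_sq_le hp0 i
      _ = 2 * (negCondEntropy p n - negCondEntropy p 0) := by
          rw [← mul_sum, Fin.sum_univ_eq_sum_range
            (fun k => negCondEntropy p (k + 1) - negCondEntropy p k), sum_range_sub]
      _ ≤ _ := by linarith [negCondEntropy_nonpos hp0 n, neg_log_card_le hp0 hp1]
  have hCS : L ^ 2 ≤ n * ∑ i : Fin n, ∑ az : A × (Fin n → S), p az * condL1 p i az.2 ^ 2 := by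
    have h := sum_sq_le_sum_mul_sum_of_sq_le_mul
      (univ : Finset (Fin n × (A × (Fin n → S))))
      (r := fun c => p c.2 * condL1 p c.1 c.2.2) (f := fun c => p c.2)
      (g := fun c => p c.2 * condL1 p c.1 c.2.2 ^ 2) (fun c _ => hp0 _)
      (fun c _ => mul_nonneg (hp0 _) (sq_nonneg _)) (fun c _ => le_of_eq (by ring))
    rw [Fintype.sum_prod_type, Fintype.sum_prod_type, Fintype.sum_prod_type] at h
    simpa only [hp1, sum_const, card_univ, Fintype.card_fin, nsmul_eq_mul, mul_one] using h
  rw [hlog]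
  apply Real.le_sqrt_of_sq_le
  rw [mul_pow, div_pow, one_pow, one_div_mul_eq_div, div_le_div_iff₀ (by positivity) hn0]
  nlinarith [mul_le_mul_of_nonneg_left hsum hn0.le]
end

section
/- Let ε ∈ [0,1/2), 0 ≤ μ ≤ 1, δ ≥ 0, and k ≥ 1. Consider a finite probability space describing k sequential rounds, where in round l a 4-bit input u_l ∈ {0,1}⁴ and a 4-bit output x_l ∈ {0,1}⁴ are generated. For each l and each history h = ((u₁,x₁),…,(u_{l−1},x_{l−1})) of positive probability, write ν(u|h) = Pr[u_l = u | h] and P_h(x|u) = Pr[x_l = x | u_l = u, h], and set δ_l(h) = ∑_{u∈U₀∪U₁} ∑_x B(x,u) P_h(x|u). Assume ν(u|h) ≥ (1/2 − ε)⁴ for every u ∈ {0,1}⁴ (as holds when the inputs are chosen using 4 bits from an ε-Santha–Vazirani source). Let Z_k := (1/k) ∑_{l=1}^{k} B(x_l, u_l). Call a realized run (μ,δ)-good if δ_l(h_l) < δ holds for more than μ·k indices l (where h_l is the realized history before round l). Then Pr[ Z_k ≤ (1/2 − ε)⁴·(1−μ)·δ/2 and the run is not (μ,δ)-good ] ≤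 exp( −k·(1/2 − ε)⁸·(1−μ)²·δ² / 8 ). -/
/-!
Exponential supermartingale (Azuma-type) argument. Put `p = (1/2 - ε)⁴`. Given the history before
round `l`, the Bell coefficient `B_l` of that round has conditional mean at least `p · δ_l`, because
each input has conditional probability at least `p` (`bell_mean_ge`). Let `c_l = p δ` if `δ_l ≥ δ`
and `c_l = 0` otherwise; it depends on the history only and is at most the conditional mean of
`B_l ∈ {0,1}`. For `t ≥ 0` this gives `E[exp (t (c_l - B_l)) | history] ≤ exp (t² / 2)`
(`class_mgf_le`), and multiplying over the rounds, `E[exp (∑ (t (c_l - B_l) - t² / 2))] ≤ 1`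
(`mgf_le_one`).

In a run that is not good, `∑ c_l ≥ p (1 - μ) δ k`; if moreover `Z_k ≤ a / 2` with
`a = p (1 - μ) δ`, then `∑ (c_l - B_l) ≥ a k / 2`. For `t = a / 2` the exponent above is then at
least `k a² / 8`, and Markov's inequality concludes.
-/

open Finset

section Rounds

variable (k : ℕ)

/-- Outcome space of `k` sequential rounds: in round `l` an input `u_l ∈ {0,1}⁴` and an
output `x_l ∈ {0,1}⁴` are produced; `(ω l).1` is the input and `(ω l).2` the output. -/
abbrev Rounds := Fin k → ((Fin 4 → Bool) × (Fin 4 → Bool))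

variable (ρ : Rounds k → ℝ)

/-- Probability of the history of `ω` before round `l`. -/
def histProb (l : Fin k) (ω : Rounds k) : ℝ :=
  ∑ ω' ∈ univ.filter (fun ω' : Rounds k => ∀ l' : Fin k, l' < l → ω' l' = ω l'), ρ ω'

/-- `ν(u|h)`: conditional probability that the round-`l` input is `u`, given the history of
`ω` before round `l`. -/
noncomputable def nuCond (l : Fin k) (ω : Rounds k) (u : Fin 4 → Bool) : ℝ :=
  (∑ ω' ∈ univ.filter
      (fun ω' : Rounds k => (∀ l' : Fin k, l' < l → ω' l' = ω l') ∧ (ω' l).1 = u), ρ ω') /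
    histProb k ρ l ω

/-- `P_h(x|u)`: conditional probability that the round-`l` output is `x`, given that the
round-`l` input is `u` and given the history of `ω` before round `l`. -/
noncomputable def pCond (l : Fin k) (ω : Rounds k) (u x : Fin 4 → Bool) : ℝ :=
  (∑ ω' ∈ univ.filter
      (fun ω' : Rounds k => (∀ l' : Fin k, l' < l → ω' l' = ω l') ∧ (ω' l) = (u, x)), ρ ω') /
    (∑ ω' ∈ univ.filter
      (fun ω' : Rounds k => (∀ l' : Fin k, l' < l → ω' l' = ω l') ∧ (ω' l).1 = u), ρ ω')

/-- `δ_l(h) = ∑_{u ∈ U₀∪U₁} ∑_x B(x,u) P_h(x|u)` for the history `h` of `ω` before round `l`. -/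
noncomputable def deltaRound (l : Fin k) (ω : Rounds k) : ℝ :=
  ∑ u ∈ U0 ∪ U1, ∑ x : Fin 4 → Bool, BellCoeff x u * pCond k ρ l ω u x

/-- The empirical Bell average `Z_k := (1/k) ∑_l B(x_l, u_l)`. -/
noncomputable def empiricalBell (ω : Rounds k) : ℝ :=
  (1 / (k : ℝ)) * ∑ l : Fin k, BellCoeff ((ω l).2) ((ω l).1)

end Rounds

lemma bellCoeff_nonneg (x u : Fin 4 → Bool) : 0 ≤ BellCoeff x u := by
  unfold BellCoeff; split_ifs <;> norm_num

lemma bellCoeff_le_one (x u : Fin 4 → Bool) : BellCoeff x u ≤ 1 := by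
  unfold BellCoeff; split_ifs <;> norm_num

/-- Since `B ∈ {0,1}`, the exponential `exp (-t B)` is affine in `B`. -/
lemma exp_bellCoeff (t : ℝ) (x u : Fin 4 → Bool) :
    Real.exp (-(t * BellCoeff x u)) = 1 - BellCoeff x u * (1 - Real.exp (-t)) := by
  unfold BellCoeff; split_ifs <;> simp

lemma exp_neg_le_quadratic {t : ℝ} (ht : 0 ≤ t) : Real.exp (-t) ≤ 1 - t + t ^ 2 / 2 := by
  have h1 : 1 + t + t ^ 2 / 2 ≤ Real.exp t := Real.quadratic_le_exp_of_nonneg ht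
  have h2 : 0 < 1 - t + t ^ 2 / 2 := by nlinarith [sq_nonneg (t - 1)]
  rw [Real.exp_neg]
  apply inv_le_of_inv_le₀ h2
  refine le_trans ?_ h1
  rw [inv_le_iff_one_le_mul₀ h2]
  -- the product of the two quadratics is `1 + t⁴ / 4`
  nlinarith [sq_nonneg (t ^ 2)]

/-- The runs that share with `ω` the history before round `l`. -/
def histClass (k : ℕ) (l : Fin k) (ω : Rounds k) : Finset (Rounds k) :=
  univ.filter (fun ω' : Rounds k => ∀ l' : Fin k, l' < l → ω' l' = ω l')

lemma mem_histClass {k : ℕ} {l : Fin k} {ω ω' : Rounds k} :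
    ω' ∈ histClass k l ω ↔ ∀ l' : Fin k, l' < l → ω' l' = ω l' := by
  simp [histClass]

lemma histClass_congr {k : ℕ} {l m : Fin k} {ω ω' : Rounds k} (h : ω' ∈ histClass k l ω)
    (hm : m ≤ l) (ω'' : Rounds k) :
    (∀ l' : Fin k, l' < m → ω'' l' = ω' l') ↔ (∀ l' : Fin k, l' < m → ω'' l' = ω l') := by
  rw [mem_histClass] at h
  refine forall₂_congr fun l' hl' => ?_
  rw [h l' (lt_of_lt_of_le hl' hm)]

lemma deltaRound_congr {k : ℕ} (ρ : Rounds k → ℝ) {l m : Fin k} {ω ω' : Rounds k}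
    (h : ω' ∈ histClass k l ω) (hm : m ≤ l) :
    deltaRound k ρ m ω' = deltaRound k ρ m ω := by
  simp only [deltaRound, pCond, histClass_congr h hm]

/-- An inequality between sums may be checked on each class of runs with a common history. -/
lemma sum_le_sum_of_histClass {k : ℕ} (l : Fin k) (f g : Rounds k → ℝ)
    (h : ∀ ω, ∑ ω' ∈ histClass k l ω, f ω' ≤ ∑ ω' ∈ histClass k l ω, g ω') :
    ∑ ω, f ω ≤ ∑ ω, g ω := by
  classical
  let r : Rounds k → Rounds k := fun ω l' => if l' < l then ω l' else default
  rw [← Finset.sum_fiberwise univ r f, ← Finset.sum_fiberwise univ r g]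
  refine Finset.sum_le_sum fun y _ => ?_
  by_cases hy : ∃ ω, r ω = y
  · obtain ⟨ω, rfl⟩ := hy
    have : (univ.filter fun ω' => r ω' = r ω) = histClass k l ω := by
      ext ω'
      rw [mem_histClass]
      simp only [mem_filter, mem_univ, true_and, r, funext_iff]
      refine forall_congr' fun l' => ?_
      by_cases hl : l' < l <;> simp [hl]
    rw [this]
    exact h ω
  · have : (univ.filter fun ω' => r ω' = y) = ∅ := by
      ext ω'
      simp only [mem_filter, mem_univ, true_and, notMem_empty, iff_false]
      exact fun h' => hy ⟨ω', h'⟩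
    simp [this]

/-- The unnormalised conditional mean of the Bell coefficient of round `l` is at least
`p · δ_l · Pr[history]`. -/
lemma bell_mean_ge {k : ℕ} (ρ : Rounds k → ℝ) (hρ0 : ∀ ω, 0 ≤ ρ ω) {p : ℝ} (hp : 0 < p)
    (l : Fin k) (ω : Rounds k) (hH : 0 < histProb k ρ l ω)
    (hν : ∀ u, p ≤ nuCond k ρ l ω u) :
    p * deltaRound k ρ l ω * histProb k ρ l ω ≤
      ∑ ω' ∈ histClass k l ω, ρ ω' * BellCoeff (ω' l).2 (ω' l).1 := by
  classical
  -- regroup the right-hand side by the value `(u, x)` of round `l`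
  have hQ : ∑ ω' ∈ histClass k l ω, ρ ω' * BellCoeff (ω' l).2 (ω' l).1 =
      ∑ u, ∑ x, BellCoeff x u * ∑ ω' ∈ univ.filter
        (fun ω' : Rounds k => (∀ l' : Fin k, l' < l → ω' l' = ω l') ∧ (ω' l) = (u, x)), ρ ω' := by
    rw [← Finset.sum_fiberwise (histClass k l ω) (fun ω' => ω' l), Fintype.sum_prod_type]
    refine Finset.sum_congr rfl fun u _ => Finset.sum_congr rfl fun x _ => ?_
    rw [histClass, Finset.filter_filter, Finset.mul_sum]
    refine Finset.sum_congr rfl fun ω' hω' => ?_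
    rw [(Finset.mem_filter.1 hω').2.2, mul_comm]
  rw [hQ]
  calc p * deltaRound k ρ l ω * histProb k ρ l ω
      = ∑ u ∈ U0 ∪ U1, ∑ x, BellCoeff x u * (pCond k ρ l ω u x * (p * histProb k ρ l ω)) := by
        rw [deltaRound, mul_right_comm, Finset.mul_sum]
        refine Finset.sum_congr rfl fun u _ => ?_
        rw [Finset.mul_sum]
        exact Finset.sum_congr rfl fun x _ => by ring
    _ ≤ ∑ u ∈ U0 ∪ U1, ∑ x, BellCoeff x u * ∑ ω' ∈ univ.filter
        (fun ω' : Rounds k => (∀ l' : Fin k, l' < l → ω' l' = ω l') ∧ (ω' l) = (u, x)), ρ ω' := by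
        refine Finset.sum_le_sum fun u _ => Finset.sum_le_sum fun x _ => ?_
        refine mul_le_mul_of_nonneg_left ?_ (bellCoeff_nonneg x u)
        have h1 := hν u
        rw [nuCond, le_div_iff₀ hH] at h1
        have hW := lt_of_lt_of_le (mul_pos hp hH) h1
        refine le_trans (mul_le_mul_of_nonneg_left h1 ?_) (le_of_eq ?_)
        · exact div_nonneg (Finset.sum_nonneg fun _ _ => hρ0 _) hW.le
        · exact div_mul_cancel₀ _ hW.ne'
    _ ≤ _ := by
        refine Finset.sum_le_sum_of_subset_of_nonneg (Finset.subset_univ _) fun u _ _ => ?_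
        exact Finset.sum_nonneg fun x _ =>
          mul_nonneg (bellCoeff_nonneg x u) (Finset.sum_nonneg fun _ _ => hρ0 _)

/-- Conditional moment generating function bound: if `c` is at most the conditional mean of the
Bell coefficient of round `l`, then `E[exp (t (c - B_l)) | history] ≤ exp (t² / 2)`. -/
lemma class_mgf_le {k : ℕ} (ρ : Rounds k → ℝ) (hρ0 : ∀ ω, 0 ≤ ρ ω) {t : ℝ} (ht : 0 ≤ t)
    (l : Fin k) (ω : Rounds k) (c : ℝ) (hc0 : 0 ≤ c)
    (hc : 0 < histProb k ρ l ω → c * histProb k ρ l ω ≤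
      ∑ ω' ∈ histClass k l ω, ρ ω' * BellCoeff (ω' l).2 (ω' l).1) :
    ∑ ω' ∈ histClass k l ω,
        ρ ω' * Real.exp (t * (c - BellCoeff (ω' l).2 (ω' l).1) - t ^ 2 / 2) ≤
      ∑ ω' ∈ histClass k l ω, ρ ω' := by
  set H := histProb k ρ l ω with hHdef
  set Q := ∑ ω' ∈ histClass k l ω, ρ ω' * BellCoeff (ω' l).2 (ω' l).1 with hQdef
  have hH : ∑ ω' ∈ histClass k l ω, ρ ω' = H := rfl
  have hH0 : 0 ≤ H := Finset.sum_nonneg fun _ _ => hρ0 _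
  have hQ0 : 0 ≤ Q := Finset.sum_nonneg fun _ _ => mul_nonneg (hρ0 _) (bellCoeff_nonneg _ _)
  have hQH : Q ≤ H := Finset.sum_le_sum fun _ _ =>
    mul_le_of_le_one_right (hρ0 _) (bellCoeff_le_one _ _)
  have hL : ∑ ω' ∈ histClass k l ω,
        ρ ω' * Real.exp (t * (c - BellCoeff (ω' l).2 (ω' l).1) - t ^ 2 / 2) =
      Real.exp (t * c - t ^ 2 / 2) * (H - Q * (1 - Real.exp (-t))) := by
    rw [← hH, hQdef, Finset.sum_mul, ← Finset.sum_sub_distrib, Finset.mul_sum]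
    refine Finset.sum_congr rfl fun ω' _ => ?_
    rw [show t * (c - BellCoeff (ω' l).2 (ω' l).1) - t ^ 2 / 2 =
      (t * c - t ^ 2 / 2) + -(t * BellCoeff (ω' l).2 (ω' l).1) by ring, Real.exp_add,
      exp_bellCoeff]
    ring
  rw [hL, hH]
  rcases hH0.eq_or_lt with h0 | hpos
  · have : Q = 0 := le_antisymm (h0 ▸ hQH) hQ0
    rw [this, ← h0]
    simp
  · have hcQ := hc hpos
    have hc1 : c ≤ 1 := by
      by_contra hlt
      nlinarith
    set s := 1 - Real.exp (-t) with hs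
    have hs0 : 0 ≤ s := by
      have : Real.exp (-t) ≤ 1 := Real.exp_le_one_iff.2 (by linarith)
      linarith
    have hst : t - t ^ 2 / 2 ≤ s := by
      have := exp_neg_le_quadratic ht
      linarith
    have h1 : H - Q * s ≤ H * Real.exp (-(c * s)) := by
      have h2 := Real.add_one_le_exp (-(c * s))
      nlinarith [mul_le_mul_of_nonneg_right hcQ hs0, mul_le_mul_of_nonneg_left h2 hH0]
    calc Real.exp (t * c - t ^ 2 / 2) * (H - Q * s)
        ≤ Real.exp (t * c - t ^ 2 / 2) * (H * Real.exp (-(c * s))) :=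
          mul_le_mul_of_nonneg_left h1 (Real.exp_pos _).le
      _ = H * Real.exp (t * c - t ^ 2 / 2 + -(c * s)) := by rw [Real.exp_add]; ring
      _ ≤ H * 1 := by
          refine mul_le_mul_of_nonneg_left (Real.exp_le_one_iff.2 ?_) hH0
          nlinarith [mul_le_mul_of_nonneg_left hst hc0,
            mul_le_mul_of_nonneg_right hc1 (sq_nonneg t)]
      _ = H := mul_one H

/-- The exponential supermartingale after `n` rounds has mean at most one. -/
lemma mgf_le_one {k : ℕ} (ρ : Rounds k → ℝ) (hρ0 : ∀ ω, 0 ≤ ρ ω) (hρ1 : ∑ ω, ρ ω = 1)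
    {t : ℝ} (ht : 0 ≤ t) (c : Fin k → Rounds k → ℝ) (hc0 : ∀ l ω, 0 ≤ c l ω)
    (hcongr : ∀ (l m : Fin k) (ω ω' : Rounds k), ω' ∈ histClass k l ω → m ≤ l → c m ω' = c m ω)
    (hc : ∀ l ω, 0 < histProb k ρ l ω → c l ω * histProb k ρ l ω ≤
      ∑ ω' ∈ histClass k l ω, ρ ω' * BellCoeff (ω' l).2 (ω' l).1) (n : ℕ) (hn : n ≤ k) :
    ∑ ω, ρ ω * Real.exp (∑ l ∈ univ.filter (fun l : Fin k => (l : ℕ) < n),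
      (t * (c l ω - BellCoeff (ω l).2 (ω l).1) - t ^ 2 / 2)) ≤ 1 := by
  induction n with
  | zero => simp [hρ1]
  | succ n ih =>
    refine le_trans ?_ (ih (by omega))
    let L : Fin k := ⟨n, hn⟩
    have hset : univ.filter (fun l : Fin k => (l : ℕ) < n + 1) =
        insert L (univ.filter (fun l : Fin k => (l : ℕ) < n)) := by
      ext l
      simp only [mem_filter, mem_univ, true_and, mem_insert, L, Fin.ext_iff]
      omega
    have hnot : L ∉ univ.filter (fun l : Fin k => (l : ℕ) < n) := by simp [L]
    refine sum_le_sum_of_histClass L _ _ fun ω => ?_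
    -- on a history class the first `n` factors are constant
    have hconst : ∀ ω' ∈ histClass k L ω,
        ∑ l ∈ univ.filter (fun l : Fin k => (l : ℕ) < n),
          (t * (c l ω' - BellCoeff (ω' l).2 (ω' l).1) - t ^ 2 / 2) =
        ∑ l ∈ univ.filter (fun l : Fin k => (l : ℕ) < n),
          (t * (c l ω - BellCoeff (ω l).2 (ω l).1) - t ^ 2 / 2) := by
      intro ω' hω'
      refine Finset.sum_congr rfl fun l hl => ?_
      have hlL : l < L := (Finset.mem_filter.1 hl).2
      rw [hcongr L l ω ω' hω' hlL.le, mem_histClass.1 hω' l hlL]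
    set E := ∑ l ∈ univ.filter (fun l : Fin k => (l : ℕ) < n),
          (t * (c l ω - BellCoeff (ω l).2 (ω l).1) - t ^ 2 / 2) with hE
    calc _ = Real.exp E * ∑ ω' ∈ histClass k L ω, ρ ω' *
            Real.exp (t * (c L ω - BellCoeff (ω' L).2 (ω' L).1) - t ^ 2 / 2) := by
          rw [Finset.mul_sum]
          refine Finset.sum_congr rfl fun ω' hω' => ?_
          rw [hset, Finset.sum_insert hnot, hconst ω' hω', hcongr L L ω ω' hω' le_rfl,
            Real.exp_add]
          ring
      _ ≤ Real.exp E * ∑ ω' ∈ histClass k L ω, ρ ω' :=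
          mul_le_mul_of_nonneg_left
            (class_mgf_le ρ hρ0 ht L ω (c L ω) (hc0 L ω) (hc L ω)) (Real.exp_pos _).le
      _ = _ := by
          rw [Finset.mul_sum]
          refine Finset.sum_congr rfl fun ω' hω' => ?_
          rw [hconst ω' hω', mul_comm]

/-- In `k` sequential rounds with inputs chosen so that every input value
has conditional probability at least `(1/2 − ε)⁴` given any positive-probability history,
the probability that the empirical Bell average satisfies
`Z_k ≤ (1/2−ε)⁴(1−μ)δ/2` while the run is *not* `(μ,δ)`-good (i.e. `δ_l(h_l) < δ` holds for
at most `μ·k` rounds `l`) is at most `exp(−k(1/2−ε)⁸(1−μ)²δ²/8)`. -/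
theorem estimation_test_sound
    (ε : ℝ) (hε0 : 0 ≤ ε) (hε : ε < 1/2)
    (μ : ℝ) (hμ0 : 0 ≤ μ) (hμ1 : μ ≤ 1)
    (δ : ℝ) (hδ : 0 ≤ δ)
    (k : ℕ) (hk : 1 ≤ k)
    (ρ : Rounds k → ℝ) (hρ0 : ∀ ω, 0 ≤ ρ ω) (hρ1 : ∑ ω, ρ ω = 1)
    (hSV : ∀ (l : Fin k) (ω : Rounds k), 0 < histProb k ρ l ω →
      ∀ u : Fin 4 → Bool, (1/2 - ε)^4 ≤ nuCond k ρ l ω u) :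
    ∑ ω ∈ univ.filter (fun ω : Rounds k =>
        empiricalBell k ω ≤ (1/2 - ε)^4 * (1 - μ) * δ / 2 ∧
        ¬ (μ * k < ((univ.filter (fun l : Fin k => deltaRound k ρ l ω < δ)).card : ℝ))),
      ρ ω
    ≤ Real.exp (-(k : ℝ) * (1/2 - ε)^8 * (1 - μ)^2 * δ^2 / 8) := by
  have hp : 0 < (1 / 2 - ε) ^ 4 := by
    have : 0 < 1 / 2 - ε := by linarith
    positivity
  have hp8 : (1 / 2 - ε) ^ 8 = ((1 / 2 - ε) ^ 4) ^ 2 := by ring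
  rw [hp8]
  set p := (1 / 2 - ε) ^ 4 with hpdef
  set a := p * (1 - μ) * δ with ha
  have ha0 : 0 ≤ a := mul_nonneg (mul_nonneg hp.le (by linarith)) hδ
  have hk0 : (0 : ℝ) < k := by exact_mod_cast hk
  let c : Fin k → Rounds k → ℝ := fun l ω => if deltaRound k ρ l ω < δ then 0 else p * δ
  have hM := mgf_le_one ρ hρ0 hρ1 (t := a / 2) (by linarith) c
    (fun l ω => by
      simp only [c]
      split_ifs
      exacts [le_rfl, mul_nonneg hp.le hδ])
    (fun l m ω ω' h hm => by simp only [c, deltaRound_congr ρ h hm])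
    (fun l ω hH => by
      simp only [c]
      split_ifs with hlt
      · rw [zero_mul]
        exact Finset.sum_nonneg fun _ _ => mul_nonneg (hρ0 _) (bellCoeff_nonneg _ _)
      · refine le_trans ?_ (bell_mean_ge ρ hρ0 hp l ω hH (hSV l ω hH))
        exact mul_le_mul_of_nonneg_right
          (mul_le_mul_of_nonneg_left (not_lt.1 hlt) hp.le) hH.le)
    k le_rfl
  have hfull : univ.filter (fun l : Fin k => (l : ℕ) < k) = univ := by
    ext l; simp
  rw [hfull] at hM
  have hexp : -(k : ℝ) * p ^ 2 * (1 - μ) ^ 2 * δ ^ 2 / 8 = -(k * a ^ 2 / 8) := by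
    rw [ha]; ring
  rw [hexp, Real.exp_neg, ← one_div, le_div_iff₀ (Real.exp_pos _), Finset.sum_mul]
  refine le_trans ?_ hM
  refine le_trans (Finset.sum_le_sum fun ω hω => ?_)
    (Finset.sum_le_sum_of_subset_of_nonneg (Finset.filter_subset _ _)
      fun ω _ _ => mul_nonneg (hρ0 ω) (Real.exp_pos _).le)
  refine mul_le_mul_of_nonneg_left (Real.exp_le_exp.2 ?_) (hρ0 ω)
  obtain ⟨hZ, hgood⟩ := (Finset.mem_filter.1 hω).2
  have hB : ∑ l : Fin k, BellCoeff (ω l).2 (ω l).1 ≤ k * (a / 2) := by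
    rw [empiricalBell, one_div, inv_mul_le_iff₀ hk0] at hZ
    exact hZ
  have hcs : a * k ≤ ∑ l, c l ω := by
    have h1 : ∑ l, c l ω =
        ((univ.filter fun l : Fin k => ¬ deltaRound k ρ l ω < δ).card : ℝ) * (p * δ) := by
      simp only [c]
      rw [Finset.sum_ite, Finset.sum_const_zero, zero_add, Finset.sum_const, nsmul_eq_mul]
    have h2 : ((univ.filter fun l : Fin k => deltaRound k ρ l ω < δ).card : ℝ) +
        ((univ.filter fun l : Fin k => ¬ deltaRound k ρ l ω < δ).card : ℝ) = k := by
      have := Finset.card_filter_add_card_filter_not (s := (univ : Finset (Fin k)))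
        (fun l : Fin k => deltaRound k ρ l ω < δ)
      rw [Finset.card_univ, Fintype.card_fin] at this
      exact_mod_cast this
    rw [h1]
    calc a * k = (1 - μ) * k * (p * δ) := by rw [ha]; ring
      _ ≤ _ := mul_le_mul_of_nonneg_right (by linarith [not_lt.1 hgood]) (mul_nonneg hp.le hδ)
  rw [Finset.sum_sub_distrib, ← Finset.mul_sum, Finset.sum_sub_distrib, Finset.sum_const,
    Finset.card_univ, Fintype.card_fin, nsmul_eq_mul]
  nlinarith [mul_le_mul_of_nonneg_left (sub_le_sub hcs hB) ha0]
end

section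
/- For all functions f₁, f₂, f₃, f₄ : {0,1} → {0,1}, one has ∑_{u ∈ U₀ ∪ U₁} B( (f₁(u¹), f₂(u²), f₃(u³), f₄(u⁴)), u ) ≥ 2. Consequently, every local deterministic 4-partite box has Bell value B·P ≥ 2 (and hence, by convexity, so does every local hidden variable box). -/
/-!
Write `fᵢ(v) = aᵢ ⊕ bᵢ v`, put `A = a₁ ⊕ a₂ ⊕ a₃ ⊕ a₄` and let `k` be the number of `i` with
`bᵢ = 1`. At the setting in `U₀` whose only `1` is in place `i` the output parity is `A ⊕ bᵢ`;
at the setting in `U₁` whose only `0` is in place `i` it is `A ⊕ (k mod 2) ⊕ bᵢ`.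
If `k` is even, the eight coefficients add up to `4`; if `k` is odd, they add up to `8 - 2k`
when `A = 0` and to `2k` when `A = 1`, which is at least `2` since `k` is `1` or `3`.
In Lean the finitely many response functions are checked by evaluation
(`two_le_card_winning`).

The Bell value of a deterministic box collapses to this sum because the box is a point mass in `x`
(`bellValue_deterministic`), and the Bell value is linear in the box, so a convex combination of
deterministic boxes satisfies the same bound.
-/

open Finset

/-- The deterministic bound, in the form of a count of the settings with coefficient `1`. -/
lemma two_le_card_winning (f : Fin 4 → Bool → Bool) :
    2 ≤ #{u ∈ U0 ∪ U1 | (u ∈ U0 ∧ parity4 (fun i => f i (u i)) = false) ∨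
      (u ∈ U1 ∧ parity4 (fun i => f i (u i)) = true)} := by
  revert f
  decide +kernel

lemma two_le_sum_bellCoeff (f : Fin 4 → Bool → Bool) :
    2 ≤ ∑ u ∈ U0 ∪ U1, BellCoeff (fun i => f i (u i)) u := by
  unfold BellCoeff
  rw [Finset.sum_boole]
  exact_mod_cast two_le_card_winning f

lemma prod_ite_eq_point_mass (x y : Fin 4 → Bool) :
    (∏ i : Fin 4, if x i = y i then (1 : ℝ) else 0) = if x = y then 1 else 0 := by
  simp [Finset.prod_ite_zero, funext_iff]

lemma bellValue_deterministic (f : Fin 4 → Bool → Bool) :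
    BellValue (fun x u => ∏ i : Fin 4, if x i = f i (u i) then (1 : ℝ) else 0) =
      ∑ u ∈ U0 ∪ U1, BellCoeff (fun i => f i (u i)) u := by
  unfold BellValue
  refine Finset.sum_congr rfl fun u _ => ?_
  simp only [prod_ite_eq_point_mass _ (fun i => f i (u i))]
  simp

lemma bellValue_sum_mul {Λ : Type} [Fintype Λ] (w : Λ → ℝ)
    (P : Λ → (Fin 4 → Bool) → (Fin 4 → Bool) → ℝ) :
    BellValue (fun x u => ∑ lam, w lam * P lam x u) = ∑ lam, w lam * BellValue (P lam) := by
  simp only [BellValue, Finset.mul_sum]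
  rw [Finset.sum_comm (s := Finset.univ (α := Λ))]
  refine Finset.sum_congr rfl fun u _ => ?_
  rw [Finset.sum_comm]
  refine Finset.sum_congr rfl fun lam _ => Finset.sum_congr rfl fun x _ => ?_
  ring

/-- For all local deterministic response functions `f₁, f₂, f₃, f₄`,
`∑_{u ∈ U₀ ∪ U₁} B((f₁(u¹),…,f₄(u⁴)), u) ≥ 2`; consequently every local deterministic box
has Bell value `≥ 2`, and hence so does every local hidden variable box. -/
theorem bell_lhv_bound :
    (∀ f : Fin 4 → Bool → Bool,
      2 ≤ ∑ u ∈ U0 ∪ U1, BellCoeff (fun i => f i (u i)) u) ∧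
    (∀ f : Fin 4 → Bool → Bool,
      2 ≤ BellValue (fun x u => ∏ i : Fin 4, if x i = f i (u i) then (1 : ℝ) else 0)) ∧
    (∀ (Λ : Type) (_ : Fintype Λ) (w : Λ → ℝ) (f : Λ → Fin 4 → Bool → Bool),
      (∀ lam, 0 ≤ w lam) → (∑ lam, w lam) = 1 →
      2 ≤ BellValue (fun x u =>
            ∑ lam, w lam * ∏ i : Fin 4, if x i = f lam i (u i) then (1 : ℝ) else 0)) := by
  have hdet : ∀ f : Fin 4 → Bool → Bool,
      2 ≤ BellValue (fun x u => ∏ i : Fin 4, if x i = f i (u i) then (1 : ℝ) else 0) :=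
    fun f => (two_le_sum_bellCoeff f).trans_eq (bellValue_deterministic f).symm
  refine ⟨two_le_sum_bellCoeff, hdet, ?_⟩
  intro Λ _ w f hw hsum
  rw [bellValue_sum_mul w
    (fun lam x u => ∏ i : Fin 4, if x i = f lam i (u i) then (1 : ℝ) else 0)]
  calc (2 : ℝ) = ∑ lam, w lam * 2 := by rw [← Finset.sum_mul, hsum, one_mul]
    _ ≤ _ := Finset.sum_le_sum fun lam _ => mul_le_mul_of_nonneg_left (hdet (f lam)) (hw lam)
end

section
/- Let |Ψ⟩ = (1/√2)·( |φ₋⟩|φ̃₊⟩ + |ψ₊⟩|ψ̃₋⟩ ) ∈ (ℂ²)^{⊗4}, where |φ₋⟩ = (1/√2)(|00⟩ − |11⟩), |ψ₊⟩ = (1/√2)(|01⟩ + |10⟩), |φ̃₊⟩ = (1/√2)(|0⟩|+⟩ + |1⟩|−⟩), |ψ̃₋⟩ = (1/√2)(|0⟩|−⟩ − |1⟩|+⟩), and |±⟩ = (1/√2)(|0⟩ ± |1⟩). For each party i ∈ {1,2,3,4} define the measurement basis vectors e_{x,0} := (1/√2)(|0⟩ + (−1)^x |1⟩) (the X basis,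 for input uⁱ = 0) and e_{x,1} := |x⟩ (the Z basis, for input uⁱ = 1), for outcome bit x ∈ {0,1}. Define P(x|u) := |⟨ e_{x¹,u¹} ⊗ e_{x²,u²} ⊗ e_{x³,u³} ⊗ e_{x⁴,u⁴} , Ψ ⟩|². Then ∑_{u ∈ U₀ ∪ U₁} ∑_{x ∈ {0,1}⁴} B(x,u)·P(x|u) = 0, i.e., the box P achieves the algebraic minimum (maximal no-signaling violation) of the Bell inequality. -/
/-!
The unnormalised amplitudes of `Ψ` are all `±1`: expanding the definition gives
`Ψ = (1/√2)⁴ ∑_b (-1)^{∑_{i<j} bᵢ bⱼ} |b⟩`, the graph state of the complete graph `K₄`.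
Hence `Ψ` is stabilised by `X₁Z₂Z₃Z₄` and `-Z₁X₂X₃X₄`, and by their images under permuting the
parties, so the outcome parity is deterministically even for settings in `U₁` and odd for settings
in `U₀`: only outcomes with Bell coefficient `0` occur.

For the proof, each measurement vector is likewise a scalar multiple of a vector with entries
in `{-1, 0, 1}` (`mvec_eq`), so each amplitude is a scalar times an integer (`amplitude_eq`). That
this integer vanishes whenever the Bell coefficient does not is a finite check over the eight
settings (`intAmp_eq_zero`).
-/

open Finset

noncomputable section

/-- `1/√2` as a complex number. -/
def invSqrt2 : ℂ := 1 / (Real.sqrt 2 : ℂ)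

/-- The computational basis vector `|b⟩` of a qubit (`ℂ² ≅ Bool → ℂ`). -/
def ket (b : Bool) : Bool → ℂ := fun b' => if b' = b then 1 else 0

/-- `|+⟩ = (1/√2)(|0⟩ + |1⟩)`. -/
def ketPlus : Bool → ℂ := fun b' => invSqrt2 * (ket false b' + ket true b')

/-- `|−⟩ = (1/√2)(|0⟩ − |1⟩)`. -/
def ketMinus : Bool → ℂ := fun b' => invSqrt2 * (ket false b' - ket true b')

/-- `|φ₋⟩ = (1/√2)(|00⟩ − |11⟩)` (two-qubit vector, `ℂ²⊗ℂ² ≅ Bool → Bool → ℂ`). -/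
def phiMinus (a b : Bool) : ℂ := invSqrt2 * (ket false a * ket false b - ket true a * ket true b)

/-- `|ψ₊⟩ = (1/√2)(|01⟩ + |10⟩)`. -/
def psiPlus (a b : Bool) : ℂ := invSqrt2 * (ket false a * ket true b + ket true a * ket false b)

/-- `|φ̃₊⟩ = (1/√2)(|0⟩|+⟩ + |1⟩|−⟩)`. -/
def phiTildePlus (a b : Bool) : ℂ := invSqrt2 * (ket false a * ketPlus b + ket true a * ketMinus b)

/-- `|ψ̃₋⟩ = (1/√2)(|0⟩|−⟩ − |1⟩|+⟩)`. -/
def psiTildeMinus (a b : Bool) : ℂ :=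
  invSqrt2 * (ket false a * ketMinus b - ket true a * ketPlus b)

/-- The four-qubit state `|Ψ⟩ = (1/√2)(|φ₋⟩|φ̃₊⟩ + |ψ₊⟩|ψ̃₋⟩)`, as an element of
`(ℂ²)^{⊗4} ≅ (Fin 4 → Bool) → ℂ`. -/
def Psi (b : Fin 4 → Bool) : ℂ :=
  invSqrt2 * (phiMinus (b 0) (b 1) * phiTildePlus (b 2) (b 3)
    + psiPlus (b 0) (b 1) * psiTildeMinus (b 2) (b 3))

/-- The measurement basis vector `e_{x,u}` of one party: for input `u = 0` the `X`-basis
vector `(1/√2)(|0⟩ + (−1)^x |1⟩)`, for input `u = 1` the `Z`-basis vector `|x⟩`. -/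
def mvec (x u : Bool) : Bool → ℂ :=
  if u then ket x
  else fun b' => invSqrt2 * (ket false b' + (if x then -1 else 1) * ket true b')

/-- The quantum box `P(x|u) = |⟨ e_{x¹,u¹} ⊗ e_{x²,u²} ⊗ e_{x³,u³} ⊗ e_{x⁴,u⁴}, Ψ ⟩|²`. -/
def Pbox (x u : Fin 4 → Bool) : ℝ :=
  Complex.normSq (∑ b : Fin 4 → Bool,
    (starRingEnd ℂ) (∏ i : Fin 4, mvec (x i) (u i) (b i)) * Psi b)

/-- The integer sign `(-1)^{∑_{i<j} bᵢ bⱼ}`: the amplitude of `Ψ` at `|b⟩`, up to the global factor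
`(1/√2)⁴`. -/
def intPsi (b : Fin 4 → Bool) : ℤ :=
  (if b 0 && b 1 then -1 else 1) * (if b 2 && b 3 then -1 else 1) *
    (if xor (b 0) (b 1) && xor (b 2) (b 3) then -1 else 1)

/-- The entries of the measurement vector `e_{x,u}`, without the normalisation of the `X` basis. -/
def intVec (x u b : Bool) : ℤ :=
  if u then (if b = x then 1 else 0) else (if x && b then -1 else 1)

/-- The unnormalised inner product `⟨e_{x,u}, Ψ⟩`. -/
def intAmp (x u : Fin 4 → Bool) : ℤ :=
  ∑ b : Fin 4 → Bool, (∏ i : Fin 4, intVec (x i) (u i) (b i)) * intPsi b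

/-- The normalisation of the measurement basis for input `u`. -/
def vecScale (u : Bool) : ℂ := if u then 1 else invSqrt2

lemma Psi_eq (b : Fin 4 → Bool) : Psi b = invSqrt2 ^ 4 * (intPsi b : ℂ) := by
  unfold Psi intPsi phiMinus psiPlus phiTildePlus psiTildeMinus ketPlus ketMinus ket
  cases b 0 <;> cases b 1 <;> cases b 2 <;> cases b 3 <;> simp <;> ring

lemma mvec_eq (x u b : Bool) : mvec x u b = vecScale u * (intVec x u b : ℂ) := by
  unfold mvec intVec vecScale ket
  cases x <;> cases u <;> cases b <;> simp

lemma amplitude_eq (x u : Fin 4 → Bool) :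
    ∑ b : Fin 4 → Bool, (starRingEnd ℂ) (∏ i : Fin 4, mvec (x i) (u i) (b i)) * Psi b
      = (starRingEnd ℂ) (∏ i : Fin 4, vecScale (u i)) * invSqrt2 ^ 4 * (intAmp x u : ℂ) := by
  unfold intAmp
  push_cast
  rw [Finset.mul_sum]
  refine Finset.sum_congr rfl fun b _ => ?_
  simp only [mvec_eq, Psi_eq, Finset.prod_mul_distrib, map_mul, map_prod, map_intCast]
  ring

/-- Outcomes of the parity penalised by the Bell expression have amplitude zero. -/
lemma intAmp_eq_zero : ∀ u x : Fin 4 → Bool,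
    (u ∈ U0 ∧ parity4 x = false) ∨ (u ∈ U1 ∧ parity4 x = true) → intAmp x u = 0 := by
  decide +kernel

/-- The quantum box obtained from the state `|Ψ⟩` with `X`/`Z`-basis
measurements achieves the algebraic minimum of the Bell expression:
`∑_{u ∈ U₀∪U₁} ∑_x B(x,u) P(x|u) = 0`. -/
theorem quantum_box_achieves_algebraic_violation :
    BellValue Pbox = 0 := by
  refine Finset.sum_eq_zero fun u _ => Finset.sum_eq_zero fun x _ => ?_
  unfold BellCoeff
  split_ifs with h
  · rw [Pbox, amplitude_eq, intAmp_eq_zero u x h]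
    simp
  · exact zero_mul _

end
end
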